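/- arXiv:0910.0443 — 2 statements merged into one kernel-verified Lean document; each statement's English description precedes it below -/
import Mathlib

section
/- In the instance graph G built from constraints r_1,…,r_M, let p be a pricing, let P be a shortest s–t path with respect to p, and let Q be a source-sink subpath of P that contains no shortcut edge. Then every variable edge on Q has price at most 1 under p. -/
/-!
Around a variable edge `u k a → v k a` of a shortcut-free source-sink subpath, the path is forced:
the only non-shortcut edge into `u k a` comes from `src k`, and the only non-shortcut edge out of
`v k a` goes to `snk k`; both neighbours exist because the subpath starts at a source and ends at a
sink. So `P` traverses `src k → u k a → v k a → snk k` at cost `p k a`. Replacing this by the direct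
edge `src k → snk k` of cost `1` yields another `s`–`t` path (`IsSTPath.bypass`) whose cost is
`pathCost P - p k a + 1` (`pathCost_bypass`), and minimality of `P` gives `p k a ≤ 1`.
-/

open Classical

namespace StackSP

/-- The data from which the Stackelberg shortest-path instance graph is built:
a sequence of `M` constraints, where constraint `i` has first query `q1 i`, second
query `q2 i`, answer set `{a // valid1 i a}` (depending only on `q1 i`), answer set
`{b // valid2 i b}` for the second query (depending only on `q2 i`), and `ans i`
maps each answer `a` for the first query to its unique consistent answer for the
second query. -/
structure Inst where
  M : ℕ
  Mpos : 0 < M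
  Q1 : Type
  Q2 : Type
  A1 : Type
  A2 : Type
  q1 : Fin M → Q1
  q2 : Fin M → Q2
  valid1 : Fin M → A1 → Prop
  valid2 : Fin M → A2 → Prop
  ans : Fin M → A1 → A2
  valid1_congr : ∀ i j a, q1 i = q1 j → (valid1 i a ↔ valid1 j a)
  valid2_congr : ∀ i j b, q2 i = q2 j → (valid2 i b ↔ valid2 j b)
  ans_valid : ∀ i a, valid1 i a → valid2 i (ans i a)
  valid1_nonempty : ∀ i, ∃ a, valid1 i a
  valid2_nonempty : ∀ i, ∃ b, valid2 i b

/-- Vertices of the instance graph: for each gadget `i`, a source `src i`, a sink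
`snk i`, and intermediate vertices `u i a`, `v i a` for each answer `a`. -/
inductive Vtx (M : ℕ) (A1 : Type) where
  | src : Fin M → Vtx M A1
  | snk : Fin M → Vtx M A1
  | u : Fin M → A1 → Vtx M A1
  | v : Fin M → A1 → Vtx M A1

variable (I : Inst)

/-- Constraint `i` is `δ`-far: no constraint `j` with `i < j ≤ i + ⌈δM⌉` shares a query
with it. -/
def Far (δ : ℝ) (i : Fin I.M) : Prop :=
  ∀ j : Fin I.M, (i : ℕ) < (j : ℕ) → (j : ℕ) ≤ (i : ℕ) + ⌈δ * (I.M : ℝ)⌉₊ →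
    I.q1 i ≠ I.q1 j ∧ I.q2 i ≠ I.q2 j

/-- The variable (pricable) edges `u i a → v i a`. -/
def IsVarEdge : Vtx I.M I.A1 → Vtx I.M I.A1 → Prop
  | .u i a, .v j b => i = j ∧ a = b ∧ I.valid1 i a
  | _, _ => False

/-- The shortcut edges: `v i a → u j b` for `i < j` with both constraints `δ`-far and
either `q1 i = q1 j` with `a ≠ b`, or `q2 i = q2 j` with inconsistent second answers.
Such a shortcut has fixed cost `(j - i)/2`. -/
def IsShortcut (δ : ℝ) : Vtx I.M I.A1 → Vtx I.M I.A1 → Prop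
  | .v i a, .u j b =>
      (i : ℕ) < (j : ℕ) ∧ Far I δ i ∧ Far I δ j ∧ I.valid1 i a ∧ I.valid1 j b ∧
        ((I.q1 i = I.q1 j ∧ a ≠ b) ∨ (I.q2 i = I.q2 j ∧ I.ans i a ≠ I.ans j b))
  | _, _ => False

/-- The non-shortcut fixed cost edges: `src i → snk i` (cost 1), `src i → u i a` and
`v i a → snk i` (cost 0), and the chaining edges `snk i → src (i+1)` (cost 0). -/
def IsFixedBasic : Vtx I.M I.A1 → Vtx I.M I.A1 → Prop
  | .src i, .snk j => i = j
  | .src i, .u j a => i = j ∧ I.valid1 j a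
  | .v i a, .snk j => i = j ∧ I.valid1 i a
  | .snk i, .src j => (j : ℕ) = (i : ℕ) + 1
  | _, _ => False

/-- The edges of the instance graph `G` (with farness parameter `δ`). -/
def IsEdge (δ : ℝ) (x y : Vtx I.M I.A1) : Prop :=
  IsVarEdge I x y ∨ IsShortcut I δ x y ∨ IsFixedBasic I x y

/-- The cost of an edge under the pricing `p` of the variable edges: a variable edge
`u i a → v i a` costs `p i a`, a shortcut `v i a → u j b` costs `(j-i)/2`, the edge
`src i → snk i` costs `1`, and all other fixed edges cost `0`. -/
noncomputable def edgeCost (p : Fin I.M → I.A1 → ℝ) : Vtx I.M I.A1 → Vtx I.M I.A1 → ℝ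
  | .u i a, .v _ _ => p i a
  | .v i _, .u j _ => (((j : ℕ) : ℝ) - ((i : ℕ) : ℝ)) / 2
  | .src _, .snk _ => 1
  | _, _ => 0

/-- Total cost of a path (a list of vertices) under pricing `p`. -/
noncomputable def pathCost (p : Fin I.M → I.A1 → ℝ) (P : List (Vtx I.M I.A1)) : ℝ :=
  ((P.zip P.tail).map fun e => edgeCost I p e.1 e.2).sum

/-- The revenue of a path: the sum of the prices of the variable edges on it. -/
noncomputable def revenue (p : Fin I.M → I.A1 → ℝ) (P : List (Vtx I.M I.A1)) : ℝ :=
  ((P.zip P.tail).map fun e =>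
    match e with
    | (Vtx.u i a, Vtx.v _ _) => p i a
    | _ => 0).sum

/-- The total fixed cost of the fixed-cost edges on a path. -/
noncomputable def fixedCostSum (P : List (Vtx I.M I.A1)) : ℝ :=
  ((P.zip P.tail).map fun e =>
    match e with
    | (Vtx.src _, Vtx.snk _) => (1 : ℝ)
    | (Vtx.v i _, Vtx.u j _) => (((j : ℕ) : ℝ) - ((i : ℕ) : ℝ)) / 2
    | _ => 0).sum

/-- The total fixed cost of the shortcut edges on a path. -/
noncomputable def shortcutCostSum (δ : ℝ) (P : List (Vtx I.M I.A1)) : ℝ :=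
  ((P.zip P.tail).map fun e =>
    if IsShortcut I δ e.1 e.2 then edgeCost I (fun _ _ => 0) e.1 e.2 else 0).sum

/-- The global source `s = s_1`. -/
def srcV : Vtx I.M I.A1 := Vtx.src ⟨0, I.Mpos⟩

/-- The global sink `t = t_M`. -/
def snkV : Vtx I.M I.A1 := Vtx.snk ⟨I.M - 1, Nat.sub_lt I.Mpos Nat.one_pos⟩

/-- An `s`–`t` path in the instance graph. -/
def IsSTPath (δ : ℝ) (P : List (Vtx I.M I.A1)) : Prop :=
  P.Chain' (IsEdge I δ) ∧ P.head? = some (srcV I) ∧ P.getLast? = some (snkV I)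

/-- A shortest `s`–`t` path with respect to the pricing `p`. -/
def IsShortestSTPath (δ : ℝ) (p : Fin I.M → I.A1 → ℝ) (P : List (Vtx I.M I.A1)) : Prop :=
  IsSTPath I δ P ∧ ∀ Q, IsSTPath I δ Q → pathCost I p P ≤ pathCost I p Q

/-- A source-sink subpath of `P`: a (contiguous) subpath of `P` starting at some source
`src i` and ending at some sink `snk j` with `i ≤ j`. -/
def IsSSSubpath (Q P : List (Vtx I.M I.A1)) : Prop :=
  Q <:+: P ∧ ∃ i j : Fin I.M, (i : ℕ) ≤ (j : ℕ) ∧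
    Q.head? = some (Vtx.src i) ∧ Q.getLast? = some (Vtx.snk j)


theorem pathCost_cons_cons (p : Fin I.M → I.A1 → ℝ) (x y : Vtx I.M I.A1)
    (l : List (Vtx I.M I.A1)) :
    pathCost I p (x :: y :: l) = edgeCost I p x y + pathCost I p (y :: l) := by
  simp [pathCost]

theorem pathCost_bypass (p : Fin I.M → I.A1 → ℝ) (k : Fin I.M) (a : I.A1)
    (A B : List (Vtx I.M I.A1)) :
    pathCost I p (A ++ .src k :: .u k a :: .v k a :: .snk k :: B) + 1 =
      pathCost I p (A ++ .src k :: .snk k :: B) + p k a := by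
  induction A with
  | nil => simp only [List.nil_append, pathCost_cons_cons, edgeCost]; ring
  | cons x A ih =>
    cases A with
    | nil =>
      simp only [List.cons_append, List.nil_append, pathCost_cons_cons I p x] at ih ⊢
      linarith
    | cons y A =>
      simp only [List.cons_append, pathCost_cons_cons I p x] at ih ⊢
      linarith

theorem IsSTPath.bypass {δ : ℝ} {k : Fin I.M} {a : I.A1} {A B : List (Vtx I.M I.A1)}
    (h : IsSTPath I δ (A ++ .src k :: .u k a :: .v k a :: .snk k :: B)) :
    IsSTPath I δ (A ++ .src k :: .snk k :: B) := by
  obtain ⟨hc, hh, hl⟩ := h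
  refine ⟨?_, ?_, ?_⟩
  · have hc' : List.IsChain (IsEdge I δ)
        (A ++ .src k :: .u k a :: .v k a :: .snk k :: B) := hc
    show List.IsChain (IsEdge I δ) (A ++ .src k :: .snk k :: B)
    rw [List.isChain_append_cons_cons] at hc' ⊢
    obtain ⟨h1, -, h2⟩ := hc'
    rw [List.isChain_cons_cons, List.isChain_cons_cons] at h2
    exact ⟨h1, Or.inr (Or.inr rfl), h2.2.2⟩
  · cases A <;> simpa using hh
  · simpa [List.getLast?_append, List.getLast?_cons_cons] using hl

/-- The only non-shortcut edge entering `u k a` comes from `src k`. -/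
theorem eq_src_of_edge_u {δ : ℝ} {x : Vtx I.M I.A1} {k : Fin I.M} {a : I.A1}
    (h : IsEdge I δ x (.u k a)) (hs : ¬ IsShortcut I δ x (.u k a)) : x = .src k := by
  rcases h with h | h | h
  · cases x <;> exact h.elim
  · exact absurd h hs
  · cases x with
    | src i => rw [h.1]
    | _ => exact h.elim

/-- The only non-shortcut edge leaving `v k a` goes to `snk k`. -/
theorem eq_snk_of_edge_v {δ : ℝ} {y : Vtx I.M I.A1} {k : Fin I.M} {a : I.A1}
    (h : IsEdge I δ (.v k a) y) (hs : ¬ IsShortcut I δ (.v k a) y) : y = .snk k := by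
  rcases h with h | h | h
  · exact h.elim
  · exact absurd h hs
  · cases y with
    | snk i => rw [h.1]
    | _ => exact h.elim

/-- If `Q` is a source-sink subpath of a shortest `s`–`t` path `P` and `Q` contains no
shortcut edge, then every variable edge on `Q` has price at most `1`. -/
theorem price_le_one_on_shortcut_free_subpath (I : Inst) (δ : ℝ) (hδ : 0 < δ)
    (p : Fin I.M → I.A1 → ℝ) (hp : ∀ i a, 0 ≤ p i a)
    (P : List (Vtx I.M I.A1)) (hP : IsShortestSTPath I δ p P)
    (Q : List (Vtx I.M I.A1)) (hQ : IsSSSubpath I Q P)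
    (hnoshort : ∀ x y : Vtx I.M I.A1, [x, y] <:+: Q → ¬ IsShortcut I δ x y) :
    ∀ (k : Fin I.M) (a : I.A1), [Vtx.u k a, Vtx.v k a] <:+: Q → p k a ≤ 1 := by
  rintro k a ⟨L, R, rfl⟩
  obtain ⟨⟨S, T, rfl⟩, i, j, -, hhead, hlast⟩ := hQ
  -- `L` and `R` are nonempty, as the subpath starts at a source and ends at a sink.
  obtain rfl | ⟨L, x, rfl⟩ := L.eq_nil_or_concat'
  · simp at hhead
  cases R with
  | nil => simp at hlast
  | cons y R =>
    have hchain : List.IsChain (IsEdge I δ)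
        (S ++ (L ++ [x] ++ [.u k a, .v k a] ++ y :: R) ++ T) := hP.1.1
    have hxu : IsEdge I δ x (.u k a) :=
      List.isChain_pair.1 (hchain.infix ⟨S ++ L, .v k a :: y :: R ++ T, by simp⟩)
    have hvy : IsEdge I δ (.v k a) y :=
      List.isChain_pair.1 (hchain.infix ⟨S ++ L ++ [x, .u k a], R ++ T, by simp⟩)
    obtain rfl := eq_src_of_edge_u I hxu (hnoshort _ _ ⟨L, .v k a :: y :: R, by simp⟩)
    obtain rfl := eq_snk_of_edge_v I hvy (hnoshort _ _ ⟨L ++ [.src k, .u k a], R, by simp⟩)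
    have heq : S ++ (L ++ [.src k] ++ [.u k a, .v k a] ++ .snk k :: R) ++ T =
        (S ++ L) ++ .src k :: .u k a :: .v k a :: .snk k :: (R ++ T) := by simp
    rw [heq] at hP
    have hmin := hP.2 _ hP.1.bypass
    have hcost := pathCost_bypass I p k a (S ++ L) (R ++ T)
    linarith

end StackSP
end

section
/- (Path Decomposition) In the instance graph G built from constraints r_1,…,r_M with parameter δ > 0, let p be a pricing and let P be a shortest s–t path with respect to p. Then there exist sets R and R' of source-sink subpaths of P such that: (D1) R ∪ R' is a source-sink partition of P; (D2) the total revenue collected on the paths in R' is at most M/2 + c/δ, for some universal constant c independent of the instance; (D3) every variable edge lying on a path of R has price at most 1 under p; and (D4) no shortcut edge of G has both of its endpoints on paths of R (in particular, there is no shortcut between any two variable edges lying on paths of R). -/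
/-!
Every contiguous subpath of a shortest path is a cheapest path between its end vertices (`Short`).
Cut `P` behind each sink into *blocks*; inside a block the gadget index only grows along
shortcuts, which cost half the growth. A block from `src s` to `snk t` costs at most `t - s + 1`
(bypass all gadgets), so it earns at most `(t - s) / 2 + 1` (`rev_block`).

Suppose a shortcut of the graph leads from a vertex `w` of a block `K` to a vertex `z` of a later
block `L` of `P`. The stretch of `P` from `w` to `z` costs at most the shortcut, i.e. half the
index difference. The parts of that stretch inside `K` and `L` already use up half of their own
index growth, so the blocks strictly between earn at most half the remaining distance. Adding the
bounds for `K` and `L`, the segment from the start of `K` to the end of `L` earns at most half its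
length plus `2` (`conflict_segment`); its length is at least `δM` because the shortcut's is.

Now scan `P` from left to right (`decompose`): if a shortcut leads from the first remaining block
to a remaining vertex, put the corresponding segment into `R'`; otherwise put the block into `R`.
Shortcuts point forward, so none joins two vertices on paths of `R`. In particular a block in `R`
uses no shortcut, hence consists of one gadget, whose variable edge costs at most the bypass price
`1` (`price_le_one`). The segments in `R'` are disjoint and of length at least `δM`, so their
revenues sum to at most `M / 2 + 2 / δ`.
-/

open Classical

namespace StackSP

variable (I : Inst)

/-! ### Costs and revenues of lists of vertices -/

/-- The index of the gadget that a vertex belongs to. -/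
def Vtx.idx {M : ℕ} {A : Type} : Vtx M A → ℕ
  | .src i => i
  | .snk i => i
  | .u i _ => i
  | .v i _ => i

/-- The sum of `f` over the edges (consecutive pairs) of a list of vertices; `pathCost`, `revenue`
and `fixedCostSum` are instances. -/
def edgeSum {V : Type} (f : V × V → ℝ) (l : List V) : ℝ := ((l.zip l.tail).map f).sum

/-- The value of `f` on the edge joining the end of `A` to the start of `B`, and `0` if one of the
two lists is empty. -/
def seam {V : Type} (f : V × V → ℝ) (A B : List V) : ℝ :=
  match A.getLast?, B.head? with
  | some a, some b => f (a, b)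
  | _, _ => 0

lemma edgeSum_cons_cons {V : Type} (f : V × V → ℝ) (x y : V) (l : List V) :
    edgeSum f (x :: y :: l) = f (x, y) + edgeSum f (y :: l) := by
  simp [edgeSum]

lemma edgeSum_append {V : Type} (f : V × V → ℝ) (A B : List V) :
    edgeSum f (A ++ B) = edgeSum f A + seam f A B + edgeSum f B := by
  induction A with
  | nil => simp [edgeSum, seam]
  | cons x A ih =>
    cases A with
    | nil =>
      cases B with
      | nil => simp [edgeSum, seam]
      | cons b B => simp [edgeSum, seam]
    | cons y A =>
      have h : seam f (x :: y :: A) B = seam f (y :: A) B := by simp [seam]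
      rw [List.cons_append, List.cons_append, edgeSum_cons_cons, edgeSum_cons_cons, h,
        ← List.cons_append, ih]
      ring

lemma edgeSum_nonneg {V : Type} {R : V → V → Prop} (f : V × V → ℝ)
    (hf : ∀ x y, R x y → 0 ≤ f (x, y)) (l : List V) (hl : l.IsChain R) : 0 ≤ edgeSum f l := by
  induction l with
  | nil => simp [edgeSum]
  | cons x l ih =>
    cases l with
    | nil => simp [edgeSum]
    | cons y l =>
      rw [List.isChain_cons_cons] at hl
      rw [edgeSum_cons_cons]
      exact add_nonneg (hf _ _ hl.1) (ih hl.2)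

lemma edge_idx_le {δ : ℝ} {x y : Vtx I.M I.A1} (h : IsEdge I δ x y) : x.idx ≤ y.idx := by
  rcases h with h | h | h <;> cases x <;> cases y <;>
    simp_all [IsVarEdge, IsShortcut, IsFixedBasic, Vtx.idx]
  omega

lemma edgeCost_nonneg {δ : ℝ} {p : Fin I.M → I.A1 → ℝ} (hp : ∀ i a, 0 ≤ p i a)
    {x y : Vtx I.M I.A1} (h : IsEdge I δ x y) : 0 ≤ edgeCost I p x y := by
  have h1 : (x.idx : ℝ) ≤ y.idx := by exact_mod_cast edge_idx_le I h
  cases x <;> cases y <;> simp only [edgeCost, Vtx.idx, hp] at h1 ⊢ <;> linarith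

lemma chain_pairwise {δ : ℝ} {l : List (Vtx I.M I.A1)} (hl : l.IsChain (IsEdge I δ)) :
    l.Pairwise (fun x y => x.idx ≤ y.idx) := by
  have h1 : l.IsChain (fun x y => x.idx ≤ y.idx) := hl.imp fun _ _ h => edge_idx_le I h
  have : IsTrans (Vtx I.M I.A1) (fun x y => x.idx ≤ y.idx) := ⟨fun _ _ _ => le_trans⟩
  exact List.isChain_iff_pairwise.1 h1

lemma idx_head_le {δ : ℝ} {l : List (Vtx I.M I.A1)} (hl : l.IsChain (IsEdge I δ))
    {x y : Vtx I.M I.A1} (hx : l.head? = some x) (hy : y ∈ l) : x.idx ≤ y.idx := by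
  obtain ⟨l', rfl⟩ := List.head?_eq_some_iff.1 hx
  have := chain_pairwise I hl
  rw [List.pairwise_cons] at this
  rcases List.mem_cons.1 hy with rfl | h
  · exact le_rfl
  · exact this.1 _ h

lemma idx_le_last {δ : ℝ} {l : List (Vtx I.M I.A1)} (hl : l.IsChain (IsEdge I δ))
    {x y : Vtx I.M I.A1} (hx : l.getLast? = some x) (hy : y ∈ l) : y.idx ≤ x.idx := by
  obtain ⟨l', rfl⟩ := List.getLast?_eq_some_iff.1 hx
  have := chain_pairwise I hl
  rw [List.pairwise_append] at this
  rcases List.mem_append.1 hy with h | h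
  · exact this.2.2 _ h _ (by simp)
  · simp at h; rw [h]

/-! ### Cheapest paths and their subpaths -/

/-- A chain of edges that is a cheapest path between its two end vertices. -/
def Short (δ : ℝ) (p : Fin I.M → I.A1 → ℝ) (l : List (Vtx I.M I.A1)) : Prop :=
  l.IsChain (IsEdge I δ) ∧ ∀ l' : List (Vtx I.M I.A1), l'.IsChain (IsEdge I δ) →
    l'.head? = l.head? → l'.getLast? = l.getLast? → pathCost I p l ≤ pathCost I p l'

lemma pathCost_append (p : Fin I.M → I.A1 → ℝ) (A B : List (Vtx I.M I.A1)) :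
    pathCost I p (A ++ B) =
      pathCost I p A + seam (fun e => edgeCost I p e.1 e.2) A B + pathCost I p B :=
  edgeSum_append _ A B

lemma Short.append {δ : ℝ} {p : Fin I.M → I.A1 → ℝ} {A B : List (Vtx I.M I.A1)}
    (h : Short I δ p (A ++ B)) : Short I δ p A ∧ Short I δ p B := by
  obtain ⟨hc, hs⟩ := h
  rw [List.isChain_append] at hc
  refine ⟨⟨hc.1, fun l' h1 h2 h3 => ?_⟩, ⟨hc.2.1, fun l' h1 h2 h3 => ?_⟩⟩
  · have := hs (l' ++ B) (by rw [List.isChain_append, h3]; exact ⟨h1, hc.2⟩)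
      (by simp [List.head?_append, h2]) (by simp [List.getLast?_append, h3])
    rw [pathCost_append, pathCost_append] at this
    have e : seam (fun e => edgeCost I p e.1 e.2) l' B
      = seam (fun e => edgeCost I p e.1 e.2) A B := by simp only [seam, h3]
    linarith
  · have := hs (A ++ l') (by rw [List.isChain_append, h2]; exact ⟨hc.1, h1, hc.2.2⟩)
      (by simp [List.head?_append, h2]) (by simp [List.getLast?_append, h3])
    rw [pathCost_append, pathCost_append] at this
    have e : seam (fun e => edgeCost I p e.1 e.2) A l'
      = seam (fun e => edgeCost I p e.1 e.2) A B := by simp only [seam, h2]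
    linarith

lemma Short.subpath {δ : ℝ} {p : Fin I.M → I.A1 → ℝ} {Q P : List (Vtx I.M I.A1)}
    (h : Short I δ p P) (hQ : Q <:+: P) : Short I δ p Q := by
  obtain ⟨A, B, rfl⟩ := hQ
  exact h.append.1.append.2

lemma pathCost_eq (p : Fin I.M → I.A1 → ℝ) (l : List (Vtx I.M I.A1)) :
    pathCost I p l = revenue I p l + fixedCostSum I l := by
  unfold pathCost revenue fixedCostSum
  rw [← List.sum_map_add]
  congr 1
  apply List.map_congr_left
  rintro ⟨x, y⟩ _
  cases x <;> cases y <;> simp [edgeCost]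

lemma fixedCostSum_nonneg {δ : ℝ} {l : List (Vtx I.M I.A1)} (hl : l.IsChain (IsEdge I δ)) :
    0 ≤ fixedCostSum I l := by
  refine edgeSum_nonneg (R := IsEdge I δ) _ (fun x y h => ?_) l hl
  have h1 : (x.idx : ℝ) ≤ y.idx := by exact_mod_cast edge_idx_le I h
  cases x <;> cases y <;> simp only [Vtx.idx] at h1 ⊢ <;> linarith

lemma revenue_nonneg {p : Fin I.M → I.A1 → ℝ} (hp : ∀ i a, 0 ≤ p i a)
    (l : List (Vtx I.M I.A1)) : 0 ≤ revenue I p l := by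
  refine List.sum_nonneg fun r hr => ?_
  obtain ⟨⟨x, y⟩, -, rfl⟩ := List.mem_map.1 hr
  cases x <;> cases y <;> simp [hp]

/-- Edges leaving a sink carry neither cost nor revenue, so costs and revenues split additively
behind a sink. -/
lemma cost_append_snk (p : Fin I.M → I.A1 → ℝ) {A : List (Vtx I.M I.A1)}
    (hA : ∀ a ∈ A.getLast?, ∃ i, a = Vtx.snk i) (B : List (Vtx I.M I.A1)) :
    pathCost I p (A ++ B) = pathCost I p A + pathCost I p B := by
  rw [pathCost_append]
  have : seam (fun e => edgeCost I p e.1 e.2) A B = 0 := by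
    unfold seam
    split
    · rename_i a b ha hb
      obtain ⟨i, rfl⟩ := hA a ha
      simp [edgeCost]
    · rfl
  linarith

lemma revenue_append_snk (p : Fin I.M → I.A1 → ℝ) {A : List (Vtx I.M I.A1)}
    (hA : ∀ a ∈ A.getLast?, ∃ i, a = Vtx.snk i) (B : List (Vtx I.M I.A1)) :
    revenue I p (A ++ B) = revenue I p A + revenue I p B := by
  unfold revenue
  have := edgeSum_append (fun e : Vtx I.M I.A1 × Vtx I.M I.A1 =>
    match e with
    | (Vtx.u i a, Vtx.v _ _) => p i a
    | _ => 0) A B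
  unfold edgeSum at this
  rw [this]
  have : seam (fun e : Vtx I.M I.A1 × Vtx I.M I.A1 =>
    match e with
    | (Vtx.u i a, Vtx.v _ _) => p i a
    | _ => 0) A B = 0 := by
    unfold seam
    split
    · rename_i a b ha hb
      obtain ⟨i, rfl⟩ := hA a ha
      simp
    · rfl
  linarith

/-- Buying no variable edge at all, one gets from `src i` to `snk (i + n)` at cost `n + 1`. -/
lemma exists_straight (δ : ℝ) (p : Fin I.M → I.A1 → ℝ) (n : ℕ) : ∀ (i : ℕ) (h : i + n < I.M),
    ∃ l : List (Vtx I.M I.A1), l.IsChain (IsEdge I δ) ∧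
      l.head? = some (Vtx.src ⟨i, by omega⟩) ∧ l.getLast? = some (Vtx.snk ⟨i + n, h⟩) ∧
      pathCost I p l = n + 1 := by
  induction n with
  | zero =>
    intro i h
    exact ⟨[Vtx.src ⟨i, by omega⟩, Vtx.snk ⟨i, by omega⟩],
      by simp [IsEdge, IsFixedBasic], by simp, by simp, by simp [pathCost, edgeCost]⟩
  | succ n ih =>
    intro i h
    obtain ⟨l, h1, h2, h3, h4⟩ := ih (i + 1) (by omega)
    refine ⟨[Vtx.src ⟨i, by omega⟩, Vtx.snk ⟨i, by omega⟩] ++ l, ?_, by simp, ?_, ?_⟩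
    · rw [List.isChain_append]
      refine ⟨by simp [IsEdge, IsFixedBasic], h1, ?_⟩
      simp [h2, IsEdge, IsFixedBasic]
    · rw [List.getLast?_append, h3]
      simp; omega
    · rw [cost_append_snk I p (by simp), h4]
      simp [pathCost, edgeCost]; ring

lemma Short.cost_le {δ : ℝ} {p : Fin I.M → I.A1 → ℝ} {l : List (Vtx I.M I.A1)}
    (hl : Short I δ p l) {i j : Fin I.M} (hi : l.head? = some (Vtx.src i))
    (hj : l.getLast? = some (Vtx.snk j)) : pathCost I p l ≤ (j : ℝ) - (i : ℝ) + 1 := by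
  have hij : (i : ℕ) ≤ j := idx_head_le I hl.1 hi (List.mem_of_getLast? hj)
  obtain ⟨l', h1, h2, h3, h4⟩ := exists_straight I δ p ((j : ℕ) - i) i (by omega)
  have := hl.2 l' h1 (by rw [h2, hi]) (by rw [h3, hj]; congr; omega)
  rw [h4, Nat.cast_sub hij] at this
  exact this

lemma fixed_edge {δ : ℝ} {a b : Vtx I.M I.A1} (h : IsEdge I δ a b) (ha : ∀ k, a ≠ Vtx.snk k) :
    ((b.idx : ℝ) - a.idx) / 2 ≤ fixedCostSum I [a, b] := by
  rcases h with h | h | h <;> cases a <;> cases b <;>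
    simp [IsVarEdge, IsShortcut, IsFixedBasic] at h ha <;>
    simp [Vtx.idx, fixedCostSum, h]

/-- Along a path that meets no sink before its last vertex, the gadget index only grows along
shortcuts, so the fixed cost is at least half of the growth. -/
lemma fixed_ge {δ : ℝ} {l : List (Vtx I.M I.A1)} : l.IsChain (IsEdge I δ) →
    (∀ k, Vtx.snk k ∉ l.dropLast) → ∀ {x y : Vtx I.M I.A1}, l.head? = some x →
    l.getLast? = some y → ((y.idx : ℝ) - x.idx) / 2 ≤ fixedCostSum I l := by
  induction l with
  | nil => simp
  | cons a l ih =>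
    intro hc hs x y hx hy
    cases l with
    | nil =>
      simp at hx hy
      subst hx; subst hy
      simp [fixedCostSum]
    | cons b l =>
      rw [List.isChain_cons_cons] at hc
      have h1 := ih hc.2 (fun k hk => hs k (by simp [hk])) (x := b) (y := y) (by simp)
        (by simpa using hy)
      simp at hx
      subst hx
      have h2 : ((b.idx : ℝ) - a.idx) / 2 + fixedCostSum I (b :: l)
          ≤ fixedCostSum I (a :: b :: l) := by
        have ha : ∀ k, a ≠ Vtx.snk k := fun k hk => hs k (by simp [hk])
        have h3 : fixedCostSum I (a :: b :: l)
            = fixedCostSum I [a, b] + fixedCostSum I (b :: l) := by simp [fixedCostSum]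
        have h4 := fixed_edge I hc.1 ha
        linarith
      linarith

/-! ### Blocks: maximal stretches without inner sinks -/

/-- Cut a path behind its first sink. -/
lemma cut_right {δ : ℝ} {l : List (Vtx I.M I.A1)} : l.IsChain (IsEdge I δ) →
    ∀ {e : Fin I.M}, l.getLast? = some (Vtx.snk e) →
    ∃ (C D : List (Vtx I.M I.A1)) (t : Fin I.M), l = C ++ D ∧ C.getLast? = some (Vtx.snk t) ∧
      (∀ k, Vtx.snk k ∉ C.dropLast) ∧
      (D = [] ∨ ∃ h : (t : ℕ) + 1 < I.M, D.head? = some (Vtx.src ⟨t + 1, h⟩)) := by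
  induction l with
  | nil => simp
  | cons a l ih =>
    intro hc e he
    by_cases ha : ∃ t, a = Vtx.snk t
    · obtain ⟨t, rfl⟩ := ha
      refine ⟨[Vtx.snk t], l, t, by simp, by simp, by simp, ?_⟩
      cases l with
      | nil => simp
      | cons b l =>
        right
        rw [List.isChain_cons_cons] at hc
        rcases hc.1 with h | h | h <;> cases b <;>
          simp_all [IsVarEdge, IsShortcut, IsFixedBasic]
        rename_i k
        have := k.2
        exact ⟨by omega, Fin.ext h⟩
    · cases l with
      | nil => simp at he; exact absurd ⟨e, he⟩ ha
      | cons b l =>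
        rw [List.isChain_cons_cons] at hc
        obtain ⟨C, D, t, h1, h2, h3, h4⟩ := ih hc.2 (e := e) (by simpa using he)
        refine ⟨a :: C, D, t, by simp [h1], ?_, ?_, h4⟩
        · rw [List.getLast?_cons, h2]; simp
        · intro k hk
          cases C with
          | nil => simp at h2
          | cons c C =>
            simp only [List.dropLast_cons_cons, List.mem_cons] at hk
            rcases hk with hk | hk
            · exact ha ⟨k, hk.symm⟩
            · exact h3 k hk

/-- Cut a path behind its last sink. -/
lemma cut_left {δ : ℝ} {l : List (Vtx I.M I.A1)} : l.IsChain (IsEdge I δ) →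
    (∀ y ∈ l.getLast?, ∀ k, y ≠ Vtx.snk k) → (∀ k, Vtx.snk k ∉ l) ∨
    ∃ (C D : List (Vtx I.M I.A1)) (t s : Fin I.M), l = C ++ D ∧ C.getLast? = some (Vtx.snk t) ∧
      D.head? = some (Vtx.src s) ∧ (∀ k, Vtx.snk k ∉ D) := by
  induction l with
  | nil => simp
  | cons a l ih =>
    intro hc hy
    cases l with
    | nil => left; intro k hk; exact hy a (by simp) k (List.mem_singleton.1 hk).symm
    | cons b l =>
      rw [List.isChain_cons_cons] at hc
      rcases ih hc.2 (by simpa using hy) with h | ⟨C, D, t, s, h1, h2, h3, h4⟩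
      · by_cases ha : ∃ t, a = Vtx.snk t
        · obtain ⟨t, rfl⟩ := ha
          right
          have : ∃ s, b = Vtx.src s := by
            rcases hc.1 with h | h | h <;> cases b <;>
              simp_all [IsVarEdge, IsShortcut, IsFixedBasic]
          obtain ⟨s, rfl⟩ := this
          exact ⟨[Vtx.snk t], Vtx.src s :: l, t, s, by simp, by simp, by simp, h⟩
        · left
          intro k hk
          rcases List.mem_cons.1 hk with hk | hk
          · exact ha ⟨k, hk.symm⟩
          · exact h k hk
      · right
        refine ⟨a :: C, D, t, s, by simp [h1], ?_, h3, h4⟩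
        rw [List.getLast?_cons, h2]; simp

/-- A source-sink path through a single block (no inner sink) earns at most half of its length
plus one: by optimality it costs at most its number of gadgets, and its shortcuts alone cost half
its length. -/
lemma rev_block {δ : ℝ} {p : Fin I.M → I.A1 → ℝ} {K : List (Vtx I.M I.A1)}
    (hK : Short I δ p K) {s t : Fin I.M} (hs : K.head? = some (Vtx.src s))
    (ht : K.getLast? = some (Vtx.snk t)) (hn : ∀ k, Vtx.snk k ∉ K.dropLast) :
    revenue I p K ≤ ((t : ℝ) - s) / 2 + 1 := by
  have h1 := hK.cost_le I hs ht
  have h2 := fixed_ge I hK.1 hn hs ht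
  rw [pathCost_eq] at h1
  simp only [Vtx.idx] at h2
  linarith

lemma shortcut_len {δ : ℝ} {w z : Vtx I.M I.A1} (h : IsShortcut I δ w z) :
    δ * I.M ≤ (z.idx : ℝ) - w.idx := by
  cases w <;> cases z <;> simp only [IsShortcut] at h
  rename_i i a j b
  obtain ⟨hij, hf, -, -, -, hq⟩ := h
  have : (i : ℕ) + ⌈δ * (I.M : ℝ)⌉₊ < j := by
    by_contra hcon
    have := hf j hij (not_lt.1 hcon)
    tauto
  have h2 : ((i : ℕ) : ℝ) + (⌈δ * (I.M : ℝ)⌉₊ : ℝ) < (j : ℕ) := by exact_mod_cast this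
  have := Nat.le_ceil (δ * (I.M : ℝ))
  simp only [Vtx.idx]
  linarith

lemma shortcut_cost {δ : ℝ} (p : Fin I.M → I.A1 → ℝ) {w z : Vtx I.M I.A1}
    (h : IsShortcut I δ w z) : edgeCost I p w z = ((z.idx : ℝ) - w.idx) / 2 := by
  cases w <;> cases z <;> simp_all [IsShortcut, edgeCost, Vtx.idx]

lemma shortcut_ne_snk {δ : ℝ} {w z : Vtx I.M I.A1} (h : IsShortcut I δ w z) (k : Fin I.M) :
    w ≠ Vtx.snk k ∧ z ≠ Vtx.snk k := by
  cases w <;> cases z <;> simp_all [IsShortcut]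

/-! ### Segments spanned by a shortcut -/

/-- If a shortcut of `G` leads from the first block `K` of a cheapest path to some vertex of the
path, then the source-sink subpath `Q` running from the start of `K` to the end of the block hit
by the shortcut has length at least `δM` and revenue at most half its length plus two. -/
lemma conflict_segment {δ : ℝ} {p : Fin I.M → I.A1 → ℝ} (hp : ∀ i a, 0 ≤ p i a)
    {S K S' : List (Vtx I.M I.A1)} (hS : Short I δ p S) {s t e : Fin I.M} (hKS : S = K ++ S')
    (hs : K.head? = some (Vtx.src s)) (ht : K.getLast? = some (Vtx.snk t))
    (hn : ∀ k, Vtx.snk k ∉ K.dropLast)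
    (hS' : S' = [] ∨ ∃ h : (t : ℕ) + 1 < I.M, S'.head? = some (Vtx.src ⟨t + 1, h⟩))
    (he : S.getLast? = some (Vtx.snk e))
    {w z : Vtx I.M I.A1} (hw : w ∈ K) (hz : z ∈ S) (hwz : IsShortcut I δ w z) :
    ∃ (Q B : List (Vtx I.M I.A1)) (r : Fin I.M), S = Q ++ B ∧ Q.head? = some (Vtx.src s) ∧
      Q.getLast? = some (Vtx.snk r) ∧
      (B = [] ∨ ∃ h : (r : ℕ) + 1 < I.M, B.head? = some (Vtx.src ⟨r + 1, h⟩)) ∧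
      revenue I p Q ≤ ((r : ℝ) - s) / 2 + 2 ∧ δ * I.M ≤ (r : ℝ) - s := by
  subst hKS
  have hKsh := hS.append.1
  have hS'sh := hS.append.2
  have hlen := shortcut_len I hwz
  have hsw : (s : ℝ) ≤ w.idx := by exact_mod_cast idx_head_le I hKsh.1 hs hw
  have hrK := rev_block I hKsh hs ht hn
  rcases List.mem_append.1 hz with hzK | hzS
  · refine ⟨K, S', t, rfl, hs, ht, hS', by linarith, ?_⟩
    have hzt : (z.idx : ℝ) ≤ t := by exact_mod_cast idx_le_last I hKsh.1 ht hzK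
    linarith
  obtain ⟨K1, K2, hK12⟩ := List.append_of_mem hw
  obtain ⟨S1, S2, hS12⟩ := List.append_of_mem hzS
  have hS'ne : S' ≠ [] := List.ne_nil_of_mem hzS
  have hS'head : ∃ h : (t : ℕ) + 1 < I.M, S'.head? = some (Vtx.src ⟨t + 1, h⟩) := by tauto
  obtain ⟨ht1, hS'head⟩ := hS'head
  have hS'last : S'.getLast? = some (Vtx.snk e) := by
    rw [List.getLast?_append_of_ne_nil _ hS'ne] at he; exact he
  -- the block around `z`: `A` ends at the last sink before `z`, `L1 ++ z :: C` is the block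
  have hleft : Short I δ p (S1 ++ [z]) := hS'sh.subpath I ⟨[], S2, by simp [hS12]⟩
  have hright : Short I δ p (z :: S2) := hS'sh.subpath I ⟨S1, [], by simp [hS12]⟩
  obtain ⟨C, B, r, hCB, hCr, hCn, hB⟩ := cut_right I hright.1 (e := e) (by
    rw [hS12, List.getLast?_append_of_ne_nil _ (by simp)] at hS'last; exact hS'last)
  obtain ⟨C', rfl⟩ : ∃ C', C = z :: C' := by
    cases C with
    | nil => simp at hCr
    | cons c C => simp at hCB; exact ⟨C, by rw [hCB.1]⟩
  have hS2 : S2 = C' ++ B := by simpa using hCB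
  have hAL : ∃ (A L1 : List (Vtx I.M I.A1)) (sL : Fin I.M), S1 = A ++ L1 ∧
      (∀ a ∈ A.getLast?, ∃ i, a = Vtx.snk i) ∧ (L1 ++ [z]).head? = some (Vtx.src sL) ∧
      ∀ k, Vtx.snk k ∉ L1 ++ [z] := by
    rcases cut_left I hleft.1 (by simp; exact fun k => (shortcut_ne_snk I hwz k).2) with
      h | ⟨A, D, t', s', h1, h2, h3, h4⟩
    · refine ⟨[], S1, ⟨t + 1, ht1⟩, rfl, by simp, ?_, h⟩
      rw [hS12] at hS'head
      cases S1 <;> simpa using hS'head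
    · have hD : D ≠ [] := by rintro rfl; simp at h3
      obtain ⟨D', d, rfl⟩ := D.eq_nil_or_concat.resolve_left hD
      rw [List.concat_eq_append, ← List.append_assoc] at h1
      obtain ⟨h5, h6⟩ := List.append_inj' h1 rfl
      simp at h6
      subst h6
      rw [List.concat_eq_append] at h3 h4
      exact ⟨A, D', s', h5, by simp [h2], h3, h4⟩
  obtain ⟨A, L1, sL, rfl, hA, hLhead, hLn⟩ := hAL
  have hS'eq : S' = A ++ ((L1 ++ z :: C') ++ B) := by rw [hS12, hS2]; simp
  have hL : Short I δ p (L1 ++ z :: C') := hS'sh.subpath I ⟨A, B, by rw [hS'eq]; simp⟩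
  have hLh : (L1 ++ z :: C').head? = some (Vtx.src sL) := by
    cases L1 <;> simpa using hLhead
  have hLl : (L1 ++ z :: C').getLast? = some (Vtx.snk r) := by
    rw [List.getLast?_append_of_ne_nil _ (by simp)]; exact hCr
  have hLnn : ∀ k, Vtx.snk k ∉ (L1 ++ z :: C').dropLast := by
    intro k hk
    rw [List.dropLast_append_of_ne_nil (by simp)] at hk
    rcases List.mem_append.1 hk with h | h
    · exact hLn k (by simp [h])
    · exact hCn k h
  have hrL := rev_block I hL hLh hLl hLnn
  -- the stretch of the path between `w` and `z` competes with the shortcut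
  have hmid : Short I δ p ((w :: K2) ++ (A ++ (L1 ++ [z]))) :=
    hS.subpath I ⟨K1, C' ++ B, by rw [hS'eq, hK12]; simp⟩
  have hcmp := hmid.2 [w, z] (by simp [IsEdge, hwz]) (by simp)
    (by rw [← List.append_assoc, ← List.append_assoc, List.getLast?_concat]; rfl)
  have hwK2 : (w :: K2).getLast? = some (Vtx.snk t) := by
    rw [hK12, List.getLast?_append_of_ne_nil _ (by simp)] at ht; exact ht
  rw [cost_append_snk I p (by simp only [hwK2]; simp), cost_append_snk I p hA] at hcmp
  have hc2 : pathCost I p [w, z] = ((z.idx : ℝ) - w.idx) / 2 := by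
    rw [← shortcut_cost I p hwz]; simp [pathCost]
  have hc3 : ((t : ℝ) - w.idx) / 2 ≤ pathCost I p (w :: K2) := by
    have hh := hmid.append.1
    have h1 := fixed_ge I hh.1 (fun k hk => hn k (by
      rw [hK12, List.dropLast_append_of_ne_nil (by simp)]
      exact List.mem_append_right _ hk)) (x := w) rfl hwK2
    have h2 := revenue_nonneg I hp (w :: K2)
    rw [pathCost_eq]
    simp only [Vtx.idx] at h1 ⊢
    linarith
  have hc4 : revenue I p A ≤ pathCost I p A := by
    have := fixedCostSum_nonneg I hmid.append.2.append.1.1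
    rw [pathCost_eq]; linarith
  have hc5 : ((z.idx : ℝ) - sL) / 2 ≤ pathCost I p (L1 ++ [z]) := by
    have hh := hmid.append.2.append.2
    have h1 := fixed_ge I hh.1 (fun k hk => hLn k (List.mem_of_mem_dropLast hk))
      (y := z) hLhead (by simp)
    have h2 := revenue_nonneg I hp (L1 ++ [z])
    rw [pathCost_eq]
    simp only [Vtx.idx] at h1 ⊢
    linarith
  refine ⟨K ++ (A ++ (L1 ++ z :: C')), B, r, by rw [hS'eq]; simp, ?_, ?_, hB, ?_, ?_⟩
  · rw [List.head?_append, hs]; simp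
  · rw [← List.append_assoc, List.getLast?_append_of_ne_nil _ (by simp), hLl]
  · rw [revenue_append_snk I p (by simp [ht]), revenue_append_snk I p hA]
    linarith
  · have hzr : (z.idx : ℝ) ≤ r := by
      exact_mod_cast idx_le_last I hL.1 hLl (List.mem_append_right _ List.mem_cons_self)
    linarith

/-- On a cheapest source-sink path that has no shortcut between its vertices, every variable edge
is bought for at most the price `1` of bypassing its gadget. -/
lemma price_le_one {δ : ℝ} {p : Fin I.M → I.A1 → ℝ} {K : List (Vtx I.M I.A1)}
    (hK : Short I δ p K) {s t : Fin I.M} (hs : K.head? = some (Vtx.src s))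
    (ht : K.getLast? = some (Vtx.snk t)) (hno : ∀ w ∈ K, ∀ z ∈ K, ¬ IsShortcut I δ w z)
    {m : Fin I.M} {am : I.A1} (hm : [Vtx.u m am, Vtx.v m am] <:+: K) : p m am ≤ 1 := by
  obtain ⟨X, Y, hXY⟩ := hm
  have hXne : X ≠ [] := by
    rintro rfl
    rw [← hXY] at hs; simp at hs
  have hYne : Y ≠ [] := by
    rintro rfl
    rw [← hXY] at ht; simp at ht
  obtain ⟨X', x, rfl⟩ := X.eq_nil_or_concat.resolve_left hXne
  obtain ⟨y, Y', rfl⟩ := List.exists_cons_of_ne_nil hYne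
  rw [List.concat_eq_append] at hXY
  have h4 : Short I δ p [x, Vtx.u m am, Vtx.v m am, y] :=
    hK.subpath I ⟨X', Y', by rw [← hXY]; simp⟩
  have hc := h4.1
  simp only [List.isChain_cons_cons] at hc
  have hx : x = Vtx.src m := by
    have hnx := hno x (by rw [← hXY]; simp) (Vtx.u m am) (by rw [← hXY]; simp)
    rcases hc.1 with h | h | h
    · cases x <;> simp [IsVarEdge] at h
    · exact absurd h hnx
    · cases x <;> simp [IsFixedBasic] at h
      rw [h.1]
  have hy : y = Vtx.snk m := by
    have hny := hno (Vtx.v m am) (by rw [← hXY]; simp) y (by rw [← hXY]; simp)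
    rcases hc.2.2.1 with h | h | h
    · cases y <;> simp [IsVarEdge] at h
    · exact absurd h hny
    · cases y <;> simp [IsFixedBasic] at h
      rw [h.1]
  subst hx
  subst hy
  have := h4.2 [Vtx.src m, Vtx.snk m] (by simp [IsEdge, IsFixedBasic]) rfl rfl
  simpa [pathCost, edgeCost] using this

/-! ### The greedy decomposition -/

/-- A member of the partition: the subpath, the gadgets of its end vertices, and whether it is put
into `R`. -/
structure Piece where
  Q : List (Vtx I.M I.A1)
  s : Fin I.M
  t : Fin I.M
  inR : Bool

/-- The pieces cover the gadgets `i, …, M - 1` consecutively. -/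
def Consec : ℕ → List (Piece I) → Prop
  | i, [] => i = I.M
  | i, q :: T => (q.s : ℕ) = i ∧ Consec (q.t + 1) T

lemma Consec.step : ∀ {T : List (Piece I)} {i : ℕ}, Consec I i T →
    ∀ (x : ℕ) (hx : x + 1 < T.length), (T[x].t : ℕ) + 1 = T[x + 1].s := by
  intro T
  induction T with
  | nil => intro i _ x hx; simp at hx
  | cons q T ih =>
    intro i h x hx
    cases x with
    | zero =>
      cases T with
      | nil => simp at hx
      | cons q' T => exact h.2.1.symm
    | succ x => simpa using ih h.2 x (by simpa using hx)

lemma Consec.last : ∀ {T : List (Piece I)} {i : ℕ}, Consec I i T → ∀ (hT : 0 < T.length),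
    (T[T.length - 1].t : ℕ) = I.M - 1 := by
  intro T
  induction T with
  | nil => intro i _ hT; simp at hT
  | cons q T ih =>
    intro i h hT
    cases T with
    | nil => have : (q.t : ℕ) + 1 = I.M := h.2
             simp; omega
    | cons q' T => simpa using ih h.2 (by simp)

/-- The greedy decomposition of a terminal stretch `S` of a cheapest path. If a shortcut leads from
the first block of `S` into `S`, the segment provided by `conflict_segment` goes to `R'`; otherwise
the first block goes to `R`. The rest of `S` is treated recursively. A segment of length
`ℓ ≥ δM` earns at most `ℓ / 2 + 2 ≤ (1 / 2 + 2 / (δM)) * ℓ`, and these bounds add up. -/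
lemma decompose {δ : ℝ} (hδ : 0 < δ) {p : Fin I.M → I.A1 → ℝ} (hp : ∀ i a, 0 ≤ p i a) (n : ℕ) :
    ∀ (S : List (Vtx I.M I.A1)) (i : ℕ), S.length ≤ n → Short I δ p S →
    ((S = [] ∧ i = I.M) ∨ ((∃ h : i < I.M, S.head? = some (Vtx.src ⟨i, h⟩)) ∧
      S.getLast? = some (snkV I))) →
    ∃ T : List (Piece I), Consec I i T ∧
      (∀ q ∈ T, q.Q <:+: S ∧ (q.s : ℕ) ≤ (q.t : ℕ) ∧ q.Q.head? = some (Vtx.src q.s) ∧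
        q.Q.getLast? = some (Vtx.snk q.t)) ∧
      (T.map fun q => if q.inR = false then revenue I p q.Q else 0).sum ≤
        (1 / 2 + 2 / (δ * I.M)) * ((I.M : ℝ) - i) ∧
      (∀ q ∈ T, q.inR = true → ∀ (m : Fin I.M) (am : I.A1),
        [Vtx.u m am, Vtx.v m am] <:+: q.Q → p m am ≤ 1) ∧
      (∀ q ∈ T, q.inR = true → ∀ w ∈ q.Q, ∀ z ∈ S, ¬ IsShortcut I δ w z) := by
  have hMpos : (0 : ℝ) < I.M := by exact_mod_cast I.Mpos
  have hC : 0 ≤ 1 / 2 + 2 / (δ * (I.M : ℝ)) := by positivity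
  induction n with
  | zero =>
    intro S i hlen hS h
    have hS0 : S = [] := List.length_eq_zero_iff.1 (by omega)
    rcases h with ⟨-, rfl⟩ | ⟨⟨_, h⟩, -⟩
    · exact ⟨[], rfl, by simp, by simp, by simp, by simp⟩
    · rw [hS0] at h; simp at h
  | succ n ih =>
    intro S i hlen hS h
    rcases h with ⟨-, rfl⟩ | ⟨⟨hi, hhead⟩, hlast⟩
    · exact ⟨[], rfl, by simp, by simp, by simp, by simp⟩
    -- putting a first segment `Q` in front of the decomposition of the rest `B`
    have key : ∀ (Q B : List (Vtx I.M I.A1)) (t : Fin I.M) (b : Bool), S = Q ++ B →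
        Q.head? = some (Vtx.src ⟨i, hi⟩) → Q.getLast? = some (Vtx.snk t) →
        (B = [] ∨ ∃ h : (t : ℕ) + 1 < I.M, B.head? = some (Vtx.src ⟨t + 1, h⟩)) →
        (b = false →
          revenue I p Q ≤ (1 / 2 + 2 / (δ * I.M)) * ((t : ℝ) + 1 - i)) →
        (b = true → ∀ w ∈ Q, ∀ z ∈ S, ¬ IsShortcut I δ w z) →
        ∃ T : List (Piece I), Consec I i T ∧
          (∀ q ∈ T, q.Q <:+: S ∧ (q.s : ℕ) ≤ (q.t : ℕ) ∧ q.Q.head? = some (Vtx.src q.s) ∧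
            q.Q.getLast? = some (Vtx.snk q.t)) ∧
          (T.map fun q => if q.inR = false then revenue I p q.Q else 0).sum ≤
            (1 / 2 + 2 / (δ * I.M)) * ((I.M : ℝ) - i) ∧
          (∀ q ∈ T, q.inR = true → ∀ (m : Fin I.M) (am : I.A1),
            [Vtx.u m am, Vtx.v m am] <:+: q.Q → p m am ≤ 1) ∧
          (∀ q ∈ T, q.inR = true → ∀ w ∈ q.Q, ∀ z ∈ S, ¬ IsShortcut I δ w z) := by
      intro Q B t b hSQ hQh hQl hB hrev hno
      have hQB : Short I δ p (Q ++ B) := hSQ ▸ hS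
      have hQ := hQB.append.1
      have hBs := hQB.append.2
      have hit : i ≤ (t : ℕ) := idx_head_le I hQ.1 hQh (List.mem_of_getLast? hQl)
      have hQne : Q ≠ [] := by rintro rfl; simp at hQh
      have hBlen : B.length ≤ n := by
        have := List.length_pos_iff.2 hQne
        rw [hSQ, List.length_append] at hlen
        omega
      obtain ⟨T, hT1, hT2, hT3, hT4, hT5⟩ := ih B (t + 1) hBlen hBs (by
        rcases eq_or_ne B [] with h0 | h0
        · left
          refine ⟨h0, ?_⟩
          rw [hSQ, h0, List.append_nil, hQl] at hlast
          simp only [snkV, Option.some.injEq, Vtx.snk.injEq] at hlast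
          rw [hlast]
          have := I.Mpos
          simp; omega
        · right
          refine ⟨hB.resolve_left h0, ?_⟩
          rw [hSQ, List.getLast?_append_of_ne_nil _ h0] at hlast
          exact hlast)
      refine ⟨⟨Q, ⟨i, hi⟩, t, b⟩ :: T, ⟨rfl, hT1⟩, ?_, ?_, ?_, ?_⟩
      · intro q hq
        rcases List.mem_cons.1 hq with rfl | hq
        · exact ⟨⟨[], B, by simp [hSQ]⟩, hit, hQh, hQl⟩
        · obtain ⟨h1, h2⟩ := hT2 q hq
          exact ⟨h1.trans ⟨Q, [], by simp [hSQ]⟩, h2⟩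
      · rw [List.map_cons, List.sum_cons]
        push_cast at hT3
        have hit' : (i : ℝ) ≤ t := by exact_mod_cast hit
        have h1 : (if b = false then revenue I p Q else 0) ≤
            (1 / 2 + 2 / (δ * I.M)) * ((t : ℝ) + 1 - i) := by
          split
          · exact hrev ‹_›
          · exact mul_nonneg hC (by linarith)
        simp only
        linarith
      · intro q hq hb m am hm
        rcases List.mem_cons.1 hq with rfl | hq
        · exact price_le_one I hQ hQh hQl
            (fun w hw z hz => hno hb w hw z (by rw [hSQ]; exact List.mem_append_left _ hz)) hm
        · exact hT4 q hq hb m am hm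
      · intro q hq hb w hw z hz
        rcases List.mem_cons.1 hq with rfl | hq
        · exact hno hb w hw z hz
        · rw [hSQ] at hz
          rcases List.mem_append.1 hz with hz | hz
          · -- shortcuts only lead forward, while `z` precedes `w`
            intro hsc
            have hwB : w ∈ B := (hT2 q hq).1.subset hw
            have hBne : B ≠ [] := List.ne_nil_of_mem hwB
            obtain ⟨h1, h2⟩ := hB.resolve_left hBne
            have h3 : (t : ℕ) + 1 ≤ w.idx := idx_head_le I hBs.1 h2 hwB
            have h4 : z.idx ≤ (t : ℕ) := idx_le_last I hQ.1 hQl hz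
            have h5 : w.idx ≤ z.idx := edge_idx_le I (Or.inr (Or.inl hsc))
            omega
          · exact hT5 q hq hb w hw z hz
    obtain ⟨K, S', t, hKS, hKl, hKn, hS'⟩ := cut_right I hS.1 hlast
    have hKh : K.head? = some (Vtx.src ⟨i, hi⟩) := by
      cases K with
      | nil => simp at hKl
      | cons a K => rw [hKS] at hhead; simpa using hhead
    by_cases hcon : ∃ w ∈ K, ∃ z ∈ S, IsShortcut I δ w z
    · obtain ⟨w, hw, z, hz, hwz⟩ := hcon
      obtain ⟨Q, B, r, h1, h2, h3, h4, h5, h6⟩ :=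
        conflict_segment I hp hS hKS hKh hKl hKn hS' hlast hw hz hwz
      refine key Q B r false h1 h2 h3 h4 (fun _ => ?_) (by simp)
      have hδM : 0 < δ * (I.M : ℝ) := by positivity
      have h7 : 2 ≤ 2 / (δ * (I.M : ℝ)) * ((r : ℝ) + 1 - i) := by
        rw [div_mul_eq_mul_div, le_div_iff₀ hδM]
        simp only at h6
        linarith
      simp only at h5
      linarith
    · push Not at hcon
      exact key K S' t true hKS hKh hKl hS' (by simp) (fun _ => hcon)

/-- Path Decomposition: there is a universal constant `c` such that for every instance
graph (parameter `δ > 0`), every pricing `p`, and every shortest `s`–`t` path `P`, the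
path `P` admits a source-sink partition `Q_0, …, Q_{k-1}` split into two sets `R`
(those `x` with `inR x = true`) and `R'` (the rest), such that (D2) the total revenue
on the subpaths of `R'` is at most `M/2 + c/δ`, (D3) every variable edge on a subpath
of `R` has price at most `1`, and (D4) no shortcut edge has both endpoints on subpaths
of `R`. -/
theorem path_decomposition :
    ∃ c : ℝ, ∀ (I : Inst) (δ : ℝ), 0 < δ →
      ∀ p : Fin I.M → I.A1 → ℝ, (∀ i a, 0 ≤ p i a) →
      ∀ P : List (Vtx I.M I.A1), IsShortestSTPath I δ p P →
      ∃ (k : ℕ) (hk : 0 < k) (Q : Fin k → List (Vtx I.M I.A1))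
        (sIdx tIdx : Fin k → Fin I.M) (inR : Fin k → Bool),
        -- (D1) `Q_0, …, Q_{k-1}` is a source-sink partition of `P`
        (∀ x : Fin k, Q x <:+: P ∧ (sIdx x : ℕ) ≤ (tIdx x : ℕ) ∧
          (Q x).head? = some (Vtx.src (sIdx x)) ∧
          (Q x).getLast? = some (Vtx.snk (tIdx x))) ∧
        (sIdx ⟨0, hk⟩ : ℕ) = 0 ∧
        (tIdx ⟨k - 1, Nat.sub_lt hk Nat.one_pos⟩ : ℕ) = I.M - 1 ∧
        (∀ (x : ℕ) (hx : x + 1 < k),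
          (tIdx ⟨x, by omega⟩ : ℕ) + 1 = (sIdx ⟨x + 1, hx⟩ : ℕ)) ∧
        -- (D2) total revenue on the subpaths in `R'` is at most `M/2 + c/δ`
        (∑ x ∈ Finset.univ.filter fun x => inR x = false, revenue I p (Q x)) ≤
          (I.M : ℝ) / 2 + c / δ ∧
        -- (D3) every variable edge on a subpath in `R` has price at most `1`
        (∀ x : Fin k, inR x = true → ∀ (m : Fin I.M) (am : I.A1),
          [Vtx.u m am, Vtx.v m am] <:+: Q x → p m am ≤ 1) ∧
        -- (D4) no shortcut edge has both endpoints on subpaths in `R`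
        (∀ x y : Fin k, inR x = true → inR y = true → ∀ w z : Vtx I.M I.A1,
          w ∈ Q x → z ∈ Q y → ¬ IsShortcut I δ w z) := by
  refine ⟨2, fun I δ hδ p hp P hP => ?_⟩
  have hPs : Short I δ p P := ⟨hP.1.1, fun l' h1 h2 h3 =>
    hP.2 l' ⟨h1, h2.trans hP.1.2.1, h3.trans hP.1.2.2⟩⟩
  obtain ⟨T, hT1, hT2, hT3, hT4, hT5⟩ := decompose I hδ hp P.length P 0 le_rfl hPs
    (Or.inr ⟨⟨I.Mpos, hP.1.2.1⟩, hP.1.2.2⟩)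
  have hMpos : (0 : ℝ) < I.M := by exact_mod_cast I.Mpos
  have hT0 : 0 < T.length := by
    cases T with
    | nil => exact absurd hT1 I.Mpos.ne
    | cons q T => simp
  refine ⟨T.length, hT0, fun x => T[x].Q, fun x => T[x].s, fun x => T[x].t, fun x => T[x].inR,
    fun x => hT2 _ (List.getElem_mem _), ?_, hT1.last I hT0, fun x hx => hT1.step I x hx, ?_,
    fun x hx => hT4 _ (List.getElem_mem _) hx, fun x y hx hy w z hw hz => ?_⟩
  · cases T with
    | nil => simp at hT0
    | cons q T => exact hT1.1
  · rw [Finset.sum_filter]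
    have h1 := Fin.sum_univ_fun_getElem T
      (fun q : Piece I => if q.inR = false then revenue I p q.Q else 0)
    have h2 : (1 / 2 + 2 / (δ * (I.M : ℝ))) * ((I.M : ℝ) - (0 : ℕ)) = (I.M : ℝ) / 2 + 2 / δ := by
      field_simp
      simp
    rw [h2, ← h1] at hT3
    exact hT3
  · exact hT5 _ (List.getElem_mem _) hx w hw z
      ((hT2 T[y] (List.getElem_mem _)).1.subset hz)

end StackSP
end
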